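/- arXiv:2207.00083 — 2 statements merged into one kernel-verified Lean document; each statement's English description precedes it below -/
import Mathlib

section
/- Let p be a prime, let B be an N × m matrix over ZMod p with linearly independent columns, and let R be a random vector uniformly distributed on (ZMod p)^N. Then for any two fixed vectors v₁, v₂ ∈ (ZMod p)^m, the random vector v₁ + R ᵥ* B has the same distribution as v₂ + R ᵥ* B; in particular both are uniform on (ZMod p)^m. Hence the encoded data observed by the colluding parties is distributed identically for all raw inputs. -/
open MeasureTheory ProbabilityTheory Matrix

instance (p : ℕ) : MeasurableSpace (ZMod p) := ⊤
instance (p : ℕ) : MeasurableSingletonClass (ZMod p) := ⟨fun _ => trivial⟩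

/-- Over a field, a matrix with linearly independent columns acts surjectively on row vectors. -/
theorem Matrix.vecMul_surjective_of_linearIndependent_col {K m n : Type*} [Field K]
    [Fintype m] [Fintype n] {A : Matrix m n K} (hA : LinearIndependent K A.col) :
    Function.Surjective A.vecMul := by
  classical
  rw [vecMul_surjective_iff_exists_left_inverse]
  obtain ⟨g, hg⟩ := A.mulVecLin.exists_leftInverse_of_injective
    (LinearMap.ker_eq_bot.2 (mulVec_injective_iff.2 hA))
  refine ⟨LinearMap.toMatrix' g, ?_⟩
  simpa [LinearMap.toMatrix'_comp, ← Matrix.toLin'_apply'] using congrArg LinearMap.toMatrix' hg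

/-- A translate of the image of a uniform random variable under a surjective homomorphism of finite
groups is uniform. -/
theorem MeasureTheory.measure_preimage_singleton_add_of_surjective {Ω G H : Type*}
    [MeasurableSpace Ω] (μ : Measure Ω) [IsProbabilityMeasure μ]
    [AddGroup G] [Fintype G] [MeasurableSpace G] [MeasurableSingletonClass G]
    [AddGroup H] [Fintype H] (f : G →+ H) (hf : Function.Surjective f)
    {X : Ω → G} (hX : Measurable X) {c : ENNReal} (hc : ∀ g, μ (X ⁻¹' {g}) = c) (v w : H) :
    μ ((fun ω => v + f (X ω)) ⁻¹' {w}) = 1 / (Fintype.card H : ENNReal) := by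
  classical
  let Y : Ω → H := fun ω => v + f (X ω)
  have hfiber (u : H) :
      μ (Y ⁻¹' {u}) = (Finset.univ.filter fun g => f g = -v + u).card * c := by
    have hpre : Y ⁻¹' {u} = X ⁻¹' ↑(Finset.univ.filter fun g => f g = -v + u) := by
      ext ω
      simp [Y, eq_neg_add_iff_add_eq]
    rw [hpre, ← sum_measure_preimage_singleton _ fun g _ => hX (measurableSet_singleton g)]
    simp [hc]
  have hconst (u : H) : μ (Y ⁻¹' {u}) = μ (Y ⁻¹' {w}) := by
    rw [hfiber, hfiber, AddMonoidHom.card_fiber_eq_of_mem_range f (hf (-v + u)) (hf (-v + w))]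
  have hmeas (u : H) : MeasurableSet (Y ⁻¹' {u}) :=
    hX (Set.toFinite {g | v + f g = u}).measurableSet
  have hsum : ∑ u, μ (Y ⁻¹' {u}) = 1 := by
    rw [sum_measure_preimage_singleton _ fun u _ => hmeas u]
    simp
  simp only [hconst, Finset.sum_const, Finset.card_univ, nsmul_eq_mul] at hsum
  rw [one_div]
  exact ENNReal.eq_inv_of_mul_eq_one_left (by rwa [mul_comm])

/-- Let `B` be an `N × m` matrix over `ZMod p` with linearly independent
columns and let `R` be uniform on `(ZMod p)^N`. Then for any fixed
`v₁ v₂ : (ZMod p)^m`, the random vectors `v₁ + R ᵥ* B` and `v₂ + R ᵥ* B` have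
the same distribution; in particular both are uniform on `(ZMod p)^m`. Hence
the encoded data observed by the colluding parties is distributed identically
for all raw inputs. -/
theorem add_vecMul_distribution_eq
    {p : ℕ} [Fact p.Prime] {Ω : Type*} [MeasurableSpace Ω]
    (μ : Measure Ω) [IsProbabilityMeasure μ]
    {N m : ℕ} (B : Matrix (Fin N) (Fin m) (ZMod p))
    (hB : LinearIndependent (ZMod p) Bᵀ)
    (R : Ω → (Fin N → ZMod p)) (hR : Measurable R)
    (hunif : ∀ v : Fin N → ZMod p, μ (R ⁻¹' {v}) = 1 / (p : ENNReal) ^ N)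
    (v₁ v₂ : Fin m → ZMod p) :
    μ.map (fun ω => v₁ + R ω ᵥ* B) = μ.map (fun ω => v₂ + R ω ᵥ* B) ∧
    ∀ w : Fin m → ZMod p,
      μ ((fun ω => v₁ + R ω ᵥ* B) ⁻¹' {w}) = 1 / (p : ENNReal) ^ m := by
  have hunif' (v w : Fin m → ZMod p) :
      μ ((fun ω => v + R ω ᵥ* B) ⁻¹' {w}) = 1 / (p : ENNReal) ^ m := by
    simpa [ZMod.card] using measure_preimage_singleton_add_of_surjective μ
      B.vecMulLinear.toAddMonoidHom (vecMul_surjective_of_linearIndependent_col hB) hR hunif v w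
  have hmeas (v : Fin m → ZMod p) : Measurable fun ω => v + R ω ᵥ* B :=
    (measurable_of_countable fun r : Fin N → ZMod p => v + r ᵥ* B).comp hR
  refine ⟨Measure.ext_of_singleton fun w => ?_, hunif' v₁⟩
  rw [Measure.map_apply (hmeas v₁) (measurableSet_singleton w),
    Measure.map_apply (hmeas v₂) (measurableSet_singleton w), hunif', hunif']
end

section
/- Let p be a prime, let B be an N × m matrix over ZMod p with linearly independent columns, let X be a random vector in (ZMod p)^k, let L : (ZMod p)^k → (ZMod p)^m be any fixed linear map, and let R be a random vector uniformly distributed on (ZMod p)^N and independent of X. Then the random vector Y = L(X) + R ᵥ* B is independent of X, and Y is uniformly distributed on (ZMod p)^m. -/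
open MeasureTheory ProbabilityTheory Matrix

section UniformShift

variable {Ω : Type*} [MeasurableSpace Ω] {μ : Measure Ω}

/-- A random element of a finite type whose point masses all agree is uniform. -/
theorem measure_preimage_singleton_eq_inv_card [IsProbabilityMeasure μ]
    {G : Type*} [Fintype G] [MeasurableSpace G] [MeasurableSingletonClass G]
    {S : Ω → G} (hS : Measurable S) {c : ENNReal} (hc : ∀ g, μ (S ⁻¹' {g}) = c) :
    c = (Fintype.card G : ENNReal)⁻¹ := by
  have h := sum_measure_preimage_singleton (μ := μ) (f := S) Finset.univ
    fun g _ => hS (measurableSet_singleton g)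
  simp only [hc, Finset.sum_const, nsmul_eq_mul, Finset.card_univ, Finset.coe_univ,
    Set.preimage_univ, measure_univ] at h
  exact ENNReal.eq_inv_of_mul_eq_one_left (by rwa [mul_comm])

/-- A surjective homomorphism of finite groups maps a uniform element to a uniform element. -/
theorem measure_preimage_singleton_of_surjective [IsProbabilityMeasure μ]
    {G H : Type*} [AddGroup G] [Fintype G] [MeasurableSpace G] [MeasurableSingletonClass G]
    [AddGroup H] [Fintype H] [MeasurableSpace H] [MeasurableSingletonClass H]
    (f : G →+ H) (hf : Function.Surjective f)
    {S : Ω → G} (hS : Measurable S) {c : ENNReal} (hc : ∀ g, μ (S ⁻¹' {g}) = c) (h : H) :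
    μ ((fun ω => f (S ω)) ⁻¹' {h}) = (Fintype.card H : ENNReal)⁻¹ := by
  classical
  have key : ∀ h, μ ((fun ω => f (S ω)) ⁻¹' {h}) =
      (Finset.univ.filter fun g => f g = h).card * c := fun h => by
    have := sum_measure_preimage_singleton (μ := μ) (f := S)
      (Finset.univ.filter fun g => f g = h) fun g _ => hS (measurableSet_singleton g)
    simp only [hc, Finset.sum_const, nsmul_eq_mul] at this
    rw [this]
    congr 1
    ext ω
    simp
  have hconst : ∀ h', μ ((fun ω => f (S ω)) ⁻¹' {h'}) = μ ((fun ω => f (S ω)) ⁻¹' {h}) :=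
    fun h' => by
      rw [key, key, AddMonoidHom.card_fiber_eq_of_mem_range f (hf h') (hf h)]
  exact measure_preimage_singleton_eq_inv_card ((measurable_of_finite f).comp hS) hconst

/-- One-time pad: shifting a uniform `S` independent of `X` by a function of `X` gives an element
that is again independent of `X`, with the same point masses. -/
theorem indepFun_add_and_measure_preimage_singleton [IsProbabilityMeasure μ]
    {G E : Type*} [AddGroup G] [Finite G] [MeasurableSpace G] [MeasurableSingletonClass G]
    [Finite E] [MeasurableSpace E] [MeasurableSingletonClass E]
    {S : Ω → G} {X : Ω → E} (hS : Measurable S) (hX : Measurable X) (hindep : IndepFun S X μ)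
    (f : E → G) {c : ENNReal} (hc : ∀ g, μ (S ⁻¹' {g}) = c) :
    IndepFun (fun ω => f (X ω) + S ω) X μ ∧
      ∀ g, μ ((fun ω => f (X ω) + S ω) ⁻¹' {g}) = c := by
  have hY : Measurable fun ω => f (X ω) + S ω :=
    (measurable_of_finite fun q : E × G => f q.1 + q.2).comp (hX.prodMk hS)
  have joint : ∀ g x, μ ((fun ω => f (X ω) + S ω) ⁻¹' {g} ∩ X ⁻¹' {x}) = c * μ (X ⁻¹' {x}) := by
    intro g x
    rw [← hc (-f x + g), ← hindep.measure_inter_preimage_eq_mul _ _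
      (measurableSet_singleton _) (measurableSet_singleton _)]
    congr 1
    ext ω
    simp only [Set.mem_inter_iff, Set.mem_preimage, Set.mem_singleton_iff]
    refine and_congr_left fun hx => ?_
    rw [hx, eq_neg_add_iff_add_eq]
  have unif : ∀ g, μ ((fun ω => f (X ω) + S ω) ⁻¹' {g}) = c := by
    intro g
    have := Fintype.ofFinite E
    have hsum := sum_measure_preimage_singleton (μ := μ) (f := X) Finset.univ
      fun x _ => hX (measurableSet_singleton x)
    have hsum' := sum_measure_preimage_singleton
      (μ := μ.restrict ((fun ω => f (X ω) + S ω) ⁻¹' {g})) (f := X) Finset.univ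
      fun x _ => hX (measurableSet_singleton x)
    simp only [Measure.restrict_apply (hX (measurableSet_singleton _)), Set.inter_comm (X ⁻¹' _),
      joint, ← Finset.mul_sum, hsum] at hsum'
    simpa using hsum'.symm
  refine ⟨?_, unif⟩
  rw [indepFun_iff_map_prod_eq_prod_map_map hY.aemeasurable hX.aemeasurable]
  have := Measure.isProbabilityMeasure_map (μ := μ) hX.aemeasurable
  refine Measure.ext_of_singleton fun ⟨g, x⟩ => ?_
  rw [Measure.map_apply (hY.prodMk hX) (measurableSet_singleton _), ← Set.singleton_prod_singleton,
    Measure.prod_prod, Measure.map_apply hY (measurableSet_singleton _),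
    Measure.map_apply hX (measurableSet_singleton _), unif, ← joint g x, Set.mk_preimage_prod]

end UniformShift

/-- A matrix over a field with linearly independent columns acts surjectively on row vectors. -/
theorem vecMul_surjective_of_linearIndependent_transpose {K m n : Type*} [Field K]
    [Fintype m] [Fintype n] {B : Matrix m n K} (hB : LinearIndependent K Bᵀ) :
    Function.Surjective fun v : m → K => v ᵥ* B := by
  classical
  have h : Function.Surjective B.vecMulLinear := by
    rw [← LinearMap.range_eq_top]
    apply Submodule.eq_top_of_finrank_eq
    rw [← Matrix.mulVecLin_transpose, ← Matrix.rank, Matrix.rank_transpose,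
      Module.finrank_fintype_fun_eq_card, ← Matrix.rank_transpose]
    exact hB.rank_matrix
  exact h

/-- **DarKnight privacy for colluding GPUs.** Let `B` be an `N × m` matrix over
`ZMod p` with linearly independent columns, let `X` be a random vector in
`(ZMod p)^k`, let `L : (ZMod p)^k → (ZMod p)^m` be any fixed linear map, and
let `R` be uniform on `(ZMod p)^N` and independent of `X`. Then
`Y = L(X) + R ᵥ* B` is independent of `X`, and `Y` is uniform on `(ZMod p)^m`:
the encoded data leaks no information about the raw data `X`. -/
theorem encoded_data_indep_and_uniform
    {p : ℕ} [Fact p.Prime] {Ω : Type*} [MeasurableSpace Ω]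
    (μ : Measure Ω) [IsProbabilityMeasure μ]
    {N m k : ℕ} (B : Matrix (Fin N) (Fin m) (ZMod p))
    (hB : LinearIndependent (ZMod p) Bᵀ)
    (X : Ω → (Fin k → ZMod p)) (hX : Measurable X)
    (L : (Fin k → ZMod p) →ₗ[ZMod p] (Fin m → ZMod p))
    (R : Ω → (Fin N → ZMod p)) (hR : Measurable R)
    (hindep : IndepFun R X μ)
    (hunif : ∀ v : Fin N → ZMod p, μ (R ⁻¹' {v}) = 1 / (p : ENNReal) ^ N) :
    IndepFun (fun ω => L (X ω) + R ω ᵥ* B) X μ ∧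
    ∀ w : Fin m → ZMod p,
      μ ((fun ω => L (X ω) + R ω ᵥ* B) ⁻¹' {w}) = 1 / (p : ENNReal) ^ m := by
  have hcard : ((Fintype.card (Fin m → ZMod p) : ℕ) : ENNReal)⁻¹ = 1 / (p : ENNReal) ^ m := by
    simp [ZMod.card]
  have hunifS := measure_preimage_singleton_of_surjective B.vecMulLinear.toAddMonoidHom
    (vecMul_surjective_of_linearIndependent_transpose hB) hR hunif
  have hvec := measurable_of_finite fun v : Fin N → ZMod p => v ᵥ* B
  rw [← hcard]
  exact indepFun_add_and_measure_preimage_singleton (hvec.comp hR) hX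
    (hindep.comp hvec measurable_id) L hunifS
end
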